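/- arXiv:2107.01613 — 5 statements merged into one kernel-verified Lean document; each statement's English description precedes it below -/
import Mathlib

section
/- For every instance (m, R, J, p, r) with J nonempty there exists a feasible schedule of J whose makespan is at most p(J)/m + 2·area(J)/R + p_max. Consequently, the optimal makespan is at most 4·max{p_max, area(J)/R, p(J)/m}. -/
/-- The set of jobs of `J` active at time `t` under schedule `σ` with processing times `p`. -/
def activeSet {ι : Type*} (J : Finset ι) (σ p : ι → ℚ) (t : ℚ) : Finset ι :=
  J.filter (fun j => σ j ≤ t ∧ t < σ j + p j)

/-- A schedule is feasible if at every time at most `m` jobs are active and the active jobs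
use at most `R` resources in total. -/
def Feasible {ι : Type*} (m R : ℕ) (J : Finset ι) (σ p : ι → ℚ) (r : ι → ℕ) : Prop :=
  ∀ t : ℚ, (activeSet J σ p t).card ≤ m ∧ ∑ j ∈ activeSet J σ p t, r j ≤ R

/-- Invariant of the in-order greedy process at current time `T`. -/
structure GreedyInv {ι : Type*} (m R : ℕ) (S : Finset ι) (σ p w : ι → ℚ) (r : ι → ℕ)
    (T : ℚ) : Prop where
  nonneg : 0 ≤ T
  start_nonneg : ∀ i ∈ S, 0 ≤ σ i
  start_le : ∀ i ∈ S, σ i ≤ T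
  feas : Feasible m R S σ p r
  work : T ≤ ∑ i ∈ S, w i * (min T (σ i + p i) - σ i)

theorem greedy_advance {ι : Type*} (m R : ℕ) (S : Finset ι) (σ p : ι → ℚ) (r : ι → ℕ)
    (hm : 1 ≤ m) (hR : 1 ≤ R) (q : ℕ) (hq : q ≤ R) (hqr : ∀ i ∈ S, q ≤ r i) (n : ℕ) :
    ∀ T : ℚ, (activeSet S σ p T).card ≤ n →
      GreedyInv m R S σ p (fun i => 1 / (m : ℚ) + 2 * (r i : ℚ) / R) r T →
      ∃ T' : ℚ, GreedyInv m R S σ p (fun i => 1 / (m : ℚ) + 2 * (r i : ℚ) / R) r T' ∧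
        (activeSet S σ p T').card + 1 ≤ m ∧ ∑ j ∈ activeSet S σ p T', r j + q ≤ R := by
  have hm' : (0 : ℚ) < m := by exact_mod_cast hm
  have hR' : (0 : ℚ) < R := by exact_mod_cast hR
  induction n with
  | zero =>
    intro T hc hI
    have h0 : activeSet S σ p T = ∅ := by
      rw [← Finset.card_eq_zero]; omega
    refine ⟨T, hI, ?_, ?_⟩
    · rw [h0]; simpa using hm
    · rw [h0]; simpa using hq
  | succ n ih =>
    intro T hc hI
    by_cases hfit : (activeSet S σ p T).card + 1 ≤ m ∧ ∑ j ∈ activeSet S σ p T, r j + q ≤ R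
    · exact ⟨T, hI, hfit⟩
    have hmem : ∀ i t, i ∈ activeSet S σ p t ↔ i ∈ S ∧ σ i ≤ t ∧ t < σ i + p i := by
      intro i t; simp [activeSet]
    have hne : (activeSet S σ p T).Nonempty := by
      rw [Finset.nonempty_iff_ne_empty]
      intro h0
      apply hfit
      rw [h0]
      exact ⟨by simpa using hm, by simpa using hq⟩
    have hw : (1 : ℚ) ≤ ∑ i ∈ activeSet S σ p T, (1 / (m : ℚ) + 2 * (r i : ℚ) / R) := by
      have e : ∑ i ∈ activeSet S σ p T, (1 / (m : ℚ) + 2 * (r i : ℚ) / R)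
          = ((activeSet S σ p T).card : ℚ) / m
            + 2 * ((∑ i ∈ activeSet S σ p T, r i : ℕ) : ℚ) / R := by
        rw [Finset.sum_add_distrib, Finset.sum_const, nsmul_eq_mul, ← Finset.sum_div,
          ← Finset.mul_sum]
        push_cast
        ring
      rw [e]
      rw [not_and_or] at hfit
      rcases hfit with h | h
      · have h1 : (m : ℚ) ≤ (activeSet S σ p T).card := by
          have : m ≤ (activeSet S σ p T).card := by omega
          exact_mod_cast this
        have h2 : (1 : ℚ) ≤ ((activeSet S σ p T).card : ℚ) / m := by
          rw [le_div_iff₀ hm']; linarith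
        have h3 : (0 : ℚ) ≤ 2 * ((∑ i ∈ activeSet S σ p T, r i : ℕ) : ℚ) / R := by positivity
        linarith
      · obtain ⟨i, hi⟩ := hne
        have h1 : r i ≤ ∑ i ∈ activeSet S σ p T, r i :=
          Finset.single_le_sum (f := r) (fun _ _ => Nat.zero_le _) hi
        have h2 := hqr i ((hmem i T).1 hi).1
        have h3 : R ≤ 2 * ∑ i ∈ activeSet S σ p T, r i := by omega
        have h4 : (R : ℚ) ≤ 2 * ((∑ i ∈ activeSet S σ p T, r i : ℕ) : ℚ) := by exact_mod_cast h3
        have h5 : (1 : ℚ) ≤ 2 * ((∑ i ∈ activeSet S σ p T, r i : ℕ) : ℚ) / R := by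
          rw [le_div_iff₀ hR']; linarith
        have h6 : (0 : ℚ) ≤ ((activeSet S σ p T).card : ℚ) / m := by positivity
        linarith
    obtain ⟨k, hk, hkmin⟩ := Finset.exists_min_image _ (fun i => σ i + p i) hne
    have hk' := (hmem k T).1 hk
    have hTT : T < σ k + p k := hk'.2.2
    apply ih (σ k + p k)
    · have hss : activeSet S σ p (σ k + p k) ⊂ activeSet S σ p T := by
        rw [Finset.ssubset_iff_of_subset]
        · exact ⟨k, hk, fun h => lt_irrefl _ ((hmem _ _).1 h).2.2⟩
        · intro i hi
          have := (hmem _ _).1 hi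
          exact (hmem _ _).2 ⟨this.1, hI.start_le i this.1, hTT.trans this.2.2⟩
      have := Finset.card_lt_card hss
      omega
    · refine ⟨hI.nonneg.trans hTT.le, hI.start_nonneg,
        fun i hi => (hI.start_le i hi).trans hTT.le, hI.feas, ?_⟩
      have hw0 : ∀ i, (0 : ℚ) ≤ 1 / (m : ℚ) + 2 * (r i : ℚ) / R := fun i => by positivity
      have key : ∑ i ∈ activeSet S σ p T, (1 / (m : ℚ) + 2 * (r i : ℚ) / R) * (σ k + p k - T)
          ≤ ∑ i ∈ S, ((1 / (m : ℚ) + 2 * (r i : ℚ) / R) * (min (σ k + p k) (σ i + p i) - σ i)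
            - (1 / (m : ℚ) + 2 * (r i : ℚ) / R) * (min T (σ i + p i) - σ i)) := by
        calc _ = ∑ i ∈ activeSet S σ p T,
            ((1 / (m : ℚ) + 2 * (r i : ℚ) / R) * (min (σ k + p k) (σ i + p i) - σ i)
            - (1 / (m : ℚ) + 2 * (r i : ℚ) / R) * (min T (σ i + p i) - σ i)) := by
              refine Finset.sum_congr rfl fun i hi => ?_
              rw [min_eq_left (hkmin i hi), min_eq_left ((hmem i T).1 hi).2.2.le]
              ring
          _ ≤ _ := by
              refine Finset.sum_le_sum_of_subset_of_nonneg (Finset.filter_subset _ _) ?_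
              intro i _ _
              rw [← mul_sub]
              refine mul_nonneg (hw0 i) ?_
              have : min T (σ i + p i) ≤ min (σ k + p k) (σ i + p i) :=
                min_le_min_right _ hTT.le
              linarith
      rw [← Finset.sum_mul, Finset.sum_sub_distrib] at key
      have h1 := hI.work
      have h2 := mul_le_mul_of_nonneg_right hw (sub_nonneg.2 hTT.le)
      linarith

theorem greedy_exists {ι : Type*} (m R : ℕ) (J : Finset ι) (p : ι → ℚ) (r : ι → ℕ)
    (hm : 1 ≤ m) (hR : 1 ≤ R) (hp : ∀ j ∈ J, 0 < p j) (hr : ∀ j ∈ J, r j ≤ R) :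
    ∃ (σ : ι → ℚ) (T : ℚ),
      GreedyInv m R J σ p (fun i => 1 / (m : ℚ) + 2 * (r i : ℚ) / R) r T := by
  classical
  induction J using Finset.induction_on_min_value r with
  | empty =>
    exact ⟨fun _ => 0, 0, le_rfl, by simp, by simp, by intro t; simp [activeSet], by simp⟩
  | insert a s ha hmin ih =>
    obtain ⟨σ, T₀, hI₀⟩ := ih (fun j hj => hp j (Finset.mem_insert_of_mem hj))
      (fun j hj => hr j (Finset.mem_insert_of_mem hj))
    obtain ⟨T, hI, hc, hs⟩ := greedy_advance m R s σ p r hm hR (r a)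
      (hr a (Finset.mem_insert_self _ _)) hmin _ T₀ le_rfl hI₀
    have hpa := hp a (Finset.mem_insert_self _ _)
    have hne : ∀ i ∈ s, Function.update σ a T i = σ i := by
      intro i hi
      exact Function.update_of_ne (ne_of_mem_of_not_mem hi ha) _ _
    have hself : Function.update σ a T a = T := Function.update_self _ _ _
    refine ⟨Function.update σ a T, T, hI.nonneg, ?_, ?_, ?_, ?_⟩
    · intro i hi
      rcases Finset.mem_insert.1 hi with rfl | hi
      · rw [hself]; exact hI.nonneg
      · rw [hne i hi]; exact hI.start_nonneg i hi
    · intro i hi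
      rcases Finset.mem_insert.1 hi with rfl | hi
      · rw [hself]
      · rw [hne i hi]; exact hI.start_le i hi
    · intro t
      by_cases ht : t < T
      · have hsub : activeSet (insert a s) (Function.update σ a T) p t ⊆ activeSet s σ p t := by
          intro i hi
          simp only [activeSet, Finset.mem_filter] at hi ⊢
          obtain ⟨h1, h2, h3⟩ := hi
          rcases Finset.mem_insert.1 h1 with rfl | h1
          · rw [hself] at h2; exact absurd ht (not_lt.2 h2)
          · rw [hne i h1] at h2 h3; exact ⟨h1, h2, h3⟩
        exact ⟨(Finset.card_le_card hsub).trans (hI.feas t).1,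
          (Finset.sum_le_sum_of_subset hsub).trans (hI.feas t).2⟩
      · have hsub : activeSet (insert a s) (Function.update σ a T) p t
            ⊆ insert a (activeSet s σ p T) := by
          intro i hi
          simp only [activeSet, Finset.mem_filter, Finset.mem_insert] at hi ⊢
          obtain ⟨h1, h2, h3⟩ := hi
          rcases h1 with h1 | h1
          · exact Or.inl h1
          · rw [hne i h1] at h3
            exact Or.inr ⟨h1, hI.start_le i h1, (not_lt.1 ht).trans_lt h3⟩
        have hna : a ∉ activeSet s σ p T := fun h => ha (Finset.mem_filter.1 h).1
        constructor
        · refine (Finset.card_le_card hsub).trans ?_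
          rw [Finset.card_insert_of_notMem hna]; exact hc
        · refine (Finset.sum_le_sum_of_subset hsub).trans ?_
          rw [Finset.sum_insert hna]; omega
    · rw [Finset.sum_insert ha, hself, min_eq_left (by linarith), sub_self, mul_zero, zero_add]
      refine hI.work.trans (le_of_eq ?_)
      refine Finset.sum_congr rfl fun i hi => ?_
      rw [hne i hi]

/-- the greedy list schedule guarantee.  There is a feasible schedule with
makespan at most `p(J)/m + 2·area(J)/R + p_max`; consequently the optimal makespan is at
most `4·max{p_max, area(J)/R, p(J)/m}`. -/
theorem greedy_list_schedule {ι : Type*} (m R : ℕ) (J : Finset ι)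
    (p : ι → ℚ) (r : ι → ℕ)
    (hm : 1 ≤ m) (hR : 1 ≤ R) (hJ : J.Nonempty)
    (hp : ∀ j ∈ J, 0 < p j) (hr : ∀ j ∈ J, r j ≤ R) :
    ∃ σ : ι → ℚ, (∀ j ∈ J, 0 ≤ σ j) ∧ Feasible m R J σ p r ∧
      J.sup' hJ (fun j => σ j + p j) ≤
        (∑ j ∈ J, p j) / m + 2 * (∑ j ∈ J, (r j : ℚ) * p j) / R + J.sup' hJ p ∧
      J.sup' hJ (fun j => σ j + p j) ≤
        4 * max (J.sup' hJ p)
          (max ((∑ j ∈ J, (r j : ℚ) * p j) / R) ((∑ j ∈ J, p j) / m)) := by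
  obtain ⟨σ, T, hI⟩ := greedy_exists m R J p r hm hR hp hr
  have hT : T ≤ (∑ j ∈ J, p j) / m + 2 * (∑ j ∈ J, (r j : ℚ) * p j) / R := by
    refine hI.work.trans ?_
    calc _ ≤ ∑ i ∈ J, (1 / (m : ℚ) + 2 * (r i : ℚ) / R) * p i := by
          refine Finset.sum_le_sum fun i _ => ?_
          refine mul_le_mul_of_nonneg_left ?_ (by positivity)
          have := min_le_right T (σ i + p i)
          linarith
      _ = _ := by
          rw [Finset.mul_sum, Finset.sum_div, Finset.sum_div, ← Finset.sum_add_distrib]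
          refine Finset.sum_congr rfl fun i _ => ?_
          ring
  have hmain : J.sup' hJ (fun j => σ j + p j) ≤
      (∑ j ∈ J, p j) / m + 2 * (∑ j ∈ J, (r j : ℚ) * p j) / R + J.sup' hJ p := by
    refine Finset.sup'_le _ _ fun j hj => ?_
    have h1 := hI.start_le j hj
    have h2 := Finset.le_sup' p hj
    linarith
  refine ⟨σ, hI.start_nonneg, hI.feas, hmain, hmain.trans ?_⟩
  rw [mul_div_assoc]
  generalize J.sup' hJ p = c
  generalize (∑ j ∈ J, (r j : ℚ) * p j) / R = b
  generalize (∑ j ∈ J, p j) / (m : ℚ) = a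
  have h1 : c ≤ max c (max b a) := le_max_left _ _
  have h2 : b ≤ max c (max b a) := (le_max_left _ _).trans (le_max_right _ _)
  have h3 : a ≤ max c (max b a) := (le_max_right _ _).trans (le_max_right _ _)
  linarith
end

section
/- Let (m, R, J, p, r) be an instance, T ∈ ℚ with T > 0, and ε ∈ (0,1] with 1/ε ∈ ℕ. For i ∈ ℕ let γ_i = ε^{1+4i} (so γ_0 = ε and γ_{i+1} = γ_i·ε^4), and for i ∈ {1, …, 1/ε} let J_{γ_i} = {j ∈ J : γ_i·T ≤ p(j) < γ_{i−1}·T}. Then there exists i ∈ {1, …, 1/ε} such that p(J_{γ_i})/m + 2·area(J_{γ_i})/R ≤ ε·(p(J)/m + 2·area(J)/R). -/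
/-- existence of a cheap gap of medium jobs.  With `γ_i = ε^(1+4i)`,
there is an index `i ∈ {1, …, 1/ε}` such that the jobs with processing time in
`[γ_i·T, γ_{i−1}·T)` satisfy
`p(J_{γ_i})/m + 2·area(J_{γ_i})/R ≤ ε·(p(J)/m + 2·area(J)/R)`. -/
theorem exists_cheap_medium_layer {ι : Type*} (m R : ℕ) (J : Finset ι)
    (p : ι → ℚ) (r : ι → ℕ)
    (hm : 1 ≤ m) (hR : 1 ≤ R)
    (hp : ∀ j ∈ J, 0 < p j) (hr : ∀ j ∈ J, r j ≤ R)
    (T : ℚ) (hT : 0 < T)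
    (ε : ℚ) (hε0 : 0 < ε) (hε1 : ε ≤ 1)
    (N : ℕ) (hN : 1 ≤ N) (hεN : ε = 1 / (N : ℚ)) :
    ∃ i : ℕ, 1 ≤ i ∧ i ≤ N ∧
      (∑ j ∈ J.filter (fun j => ε ^ (4 * i + 1) * T ≤ p j ∧ p j < ε ^ (4 * i - 3) * T), p j) / m
        + 2 * (∑ j ∈ J.filter
            (fun j => ε ^ (4 * i + 1) * T ≤ p j ∧ p j < ε ^ (4 * i - 3) * T),
            (r j : ℚ) * p j) / R
      ≤ ε * ((∑ j ∈ J, p j) / m + 2 * (∑ j ∈ J, (r j : ℚ) * p j) / R) := by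
  classical
  set w : ι → ℚ := fun j => p j / m + 2 * ((r j : ℚ) * p j) / R with hw
  have key : ∀ S : Finset ι, (∑ j ∈ S, p j) / m + 2 * (∑ j ∈ S, (r j : ℚ) * p j) / R
      = ∑ j ∈ S, w j := by
    intro S
    rw [hw, Finset.sum_add_distrib, Finset.sum_div, Finset.mul_sum, Finset.sum_div]
  have hw0 : ∀ j ∈ J, 0 ≤ w j := by
    intro j hj
    have := hp j hj
    simp only [hw]
    positivity
  simp only [key]
  by_contra! hcon
  set L : ℕ → Finset ι := fun i =>
    J.filter (fun j => ε ^ (4 * i + 1) * T ≤ p j ∧ p j < ε ^ (4 * i - 3) * T) with hL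
  have hlt : ∀ i k : ℕ, i < k → Disjoint (L i) (L k) := by
    intro i k hik
    rw [Finset.disjoint_left]
    intro j h1 h2
    simp only [hL, Finset.mem_filter] at h1 h2
    have h3 : ε ^ (4 * k - 3) ≤ ε ^ (4 * i + 1) :=
      pow_le_pow_of_le_one hε0.le hε1 (by omega)
    have h4 := mul_le_mul_of_nonneg_right h3 hT.le
    linarith [h1.2.1, h2.2.2]
  have hdisj : ((Finset.Icc 1 N : Finset ℕ) : Set ℕ).PairwiseDisjoint L := by
    intro i _ k _ hik
    rcases lt_or_gt_of_ne hik with h | h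
    · exact hlt i k h
    · exact (hlt k i h).symm
  have hle : ∑ i ∈ Finset.Icc 1 N, ∑ j ∈ L i, w j ≤ ∑ j ∈ J, w j := by
    rw [← Finset.sum_biUnion hdisj]
    refine Finset.sum_le_sum_of_subset_of_nonneg ?_ (fun j hj _ => hw0 j hj)
    exact Finset.biUnion_subset.2 fun i _ => Finset.filter_subset _ _
  have hgt : ∑ i ∈ Finset.Icc 1 N, ε * ∑ j ∈ J, w j
      < ∑ i ∈ Finset.Icc 1 N, ∑ j ∈ L i, w j := by
    refine Finset.sum_lt_sum_of_nonempty ⟨1, by simp [hN]⟩ ?_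
    intro i hi
    rw [Finset.mem_Icc] at hi
    exact hcon i hi.1 hi.2
  have hN0 : (N : ℚ) ≠ 0 := by positivity
  have hNe : (N : ℚ) * ε = 1 := by rw [hεN]; field_simp
  rw [Finset.sum_const, Nat.card_Icc, nsmul_eq_mul, Nat.add_sub_cancel, ← mul_assoc, hNe,
    one_mul] at hgt
  exact absurd hle (not_le.2 hgt)
end

section
/- Let ε ∈ (0,1], let T ∈ ℚ with T > 0, and let (m, R, J, p, r) be an instance such that every job j ∈ J satisfies p(j) ≤ ε·T and such that p(J)/m + 2·area(J)/R ≤ 3ε·T. Then there exists a feasible schedule of J with makespan at most 4ε·T. -/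
namespace MedJobs

/-- total weight of the jobs active at time `t`. -/
def load {ι M : Type*} [AddCommMonoid M] (S : Finset ι) (σ p : ι → ℚ) (w : ι → M) (t : ℚ) : M :=
  ∑ j ∈ S, if σ j ≤ t ∧ t < σ j + p j then w j else 0

lemma cover {ι : Type*} (S : Finset ι) (σ p w : ι → ℚ) (s : ℚ) (hs : 0 ≤ s)
    (hσ : ∀ j ∈ S, 0 ≤ σ j) (hp : ∀ j ∈ S, 0 < p j) (hw : ∀ j ∈ S, 0 ≤ w j)
    (h : ∀ t, 0 ≤ t → t < s → 1 ≤ load S σ p w t) : s ≤ ∑ j ∈ S, w j * p j := by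
  classical
  let F : ℚ → ℚ := fun x => ∑ j ∈ S, w j * (min x (σ j + p j) - min x (σ j))
  let K : Finset ℚ := S.image σ ∪ S.image (fun j => σ j + p j)
  have key : ∀ n : ℕ, ∀ x y : ℚ, 0 ≤ x → x < y → y ≤ s →
      (K.filter (fun b => x < b ∧ b < y)).card ≤ n → y - x ≤ F y - F x := by
    intro n
    induction n with
    | zero =>
      intro x y hx hxy hys hc
      have hemp : K.filter (fun b => x < b ∧ b < y) = ∅ := by
        simpa using hc
      have hno : ∀ b ∈ K, x < b → y ≤ b := by
        intro b hb hxb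
        by_contra hlt
        have : b ∈ K.filter (fun b => x < b ∧ b < y) := by
          simp only [Finset.mem_filter]
          exact ⟨hb, hxb, not_le.mp hlt⟩
        rw [hemp] at this
        simp at this
      have e : F y - F x = (y - x) * load S σ p w x := by
        simp only [F, load]
        rw [← Finset.sum_sub_distrib, Finset.mul_sum]
        refine Finset.sum_congr rfl fun j hj => ?_
        have h1 : x < σ j → y ≤ σ j := hno _ (by
          simp only [K, Finset.mem_union, Finset.mem_image]; exact Or.inl ⟨j, hj, rfl⟩)
        have h2 : x < σ j + p j → y ≤ σ j + p j := hno _ (by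
          simp only [K, Finset.mem_union, Finset.mem_image]; exact Or.inr ⟨j, hj, rfl⟩)
        have hpj := hp j hj
        by_cases ha : σ j ≤ x
        · by_cases hb : x < σ j + p j
          · rw [if_pos ⟨ha, hb⟩, min_eq_left (h2 hb), min_eq_left hb.le, min_eq_right ha,
              min_eq_right (ha.trans hxy.le)]
            ring
          · rw [if_neg (fun h => hb h.2)]
            push Not at hb
            rw [min_eq_right hb, min_eq_right ha, min_eq_right (hb.trans hxy.le),
              min_eq_right (ha.trans hxy.le)]
            ring
        · rw [if_neg (fun h => ha h.1)]
          push Not at ha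
          have := h1 ha
          rw [min_eq_left ha.le, min_eq_left this, min_eq_left (by linarith : y ≤ σ j + p j),
            min_eq_left (by linarith : x ≤ σ j + p j)]
          ring
      rw [e]
      have := h x hx (by linarith)
      nlinarith
    | succ n ih =>
      intro x y hx hxy hys hc
      by_cases hne : (K.filter (fun b => x < b ∧ b < y)).Nonempty
      · obtain ⟨b, hb⟩ := hne
        have hb' := hb
        simp only [Finset.mem_filter] at hb
        obtain ⟨hbK, hxb, hby⟩ := hb
        have c1 : (K.filter (fun c => x < c ∧ c < b)).card <
            (K.filter (fun c => x < c ∧ c < y)).card := by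
          apply Finset.card_lt_card
          rw [Finset.ssubset_iff_of_subset]
          · exact ⟨b, hb', by simp⟩
          · intro c; simp only [Finset.mem_filter]
            exact fun h => ⟨h.1, h.2.1, h.2.2.trans hby⟩
        have c2 : (K.filter (fun c => b < c ∧ c < y)).card <
            (K.filter (fun c => x < c ∧ c < y)).card := by
          apply Finset.card_lt_card
          rw [Finset.ssubset_iff_of_subset]
          · exact ⟨b, hb', by simp⟩
          · intro c; simp only [Finset.mem_filter]
            exact fun h => ⟨h.1, hxb.trans h.2.1, h.2.2⟩
        have i1 := ih x b hx hxb (by linarith) (by omega)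
        have i2 := ih b y (by linarith) hby hys (by omega)
        linarith
      · apply ih x y hx hxy hys
        rw [Finset.not_nonempty_iff_eq_empty.mp hne]
        simp
  have hF0 : F 0 = 0 := by
    simp only [F]
    refine Finset.sum_eq_zero fun j hj => ?_
    have := hσ j hj
    have := hp j hj
    rw [min_eq_left (by linarith), min_eq_left (by linarith)]
    simp
  have hFs : F s ≤ ∑ j ∈ S, w j * p j := by
    refine Finset.sum_le_sum fun j hj => ?_
    refine mul_le_mul_of_nonneg_left ?_ (hw j hj)
    have := hp j hj
    rcases le_total s (σ j) with h | h
    · rw [min_eq_left h]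
      have := min_le_left s (σ j + p j)
      linarith
    · rw [min_eq_right h]
      have := min_le_right s (σ j + p j)
      linarith
  rcases hs.eq_or_lt with h0 | h0
  · rw [← h0] at hFs ⊢
    linarith
  · have := key _ 0 s le_rfl h0 le_rfl le_rfl
    linarith

lemma firstfit {ι : Type*} (S : Finset ι) (σ p : ι → ℚ) (hp : ∀ j ∈ S, 0 < p j) (s : ℚ)
    (Q : ℚ → Prop)
    (hQ : ∀ t t', (∀ j ∈ S, (σ j ≤ t ∧ t < σ j + p j) ↔ (σ j ≤ t' ∧ t' < σ j + p j)) →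
      Q t → Q t')
    (hQ0 : ∀ t, (∀ j ∈ S, ¬ (σ j ≤ t ∧ t < σ j + p j)) → Q t) :
    ∃ t, s ≤ t ∧ Q t ∧ ∀ t', s ≤ t' → t' < t → ¬ Q t' := by
  classical
  let K : Finset ℚ := insert s (S.image σ ∪ S.image (fun j => σ j + p j))
  have hsK : s ∈ K := Finset.mem_insert_self _ _
  have hK1 : ∀ j ∈ S, σ j ∈ K := fun j hj => by
    simp only [K, Finset.mem_insert, Finset.mem_union, Finset.mem_image]
    exact Or.inr (Or.inl ⟨j, hj, rfl⟩)
  have hK2 : ∀ j ∈ S, σ j + p j ∈ K := fun j hj => by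
    simp only [K, Finset.mem_insert, Finset.mem_union, Finset.mem_image]
    exact Or.inr (Or.inr ⟨j, hj, rfl⟩)
  let C := K.filter (fun t => s ≤ t ∧ Q t)
  have hC : C.Nonempty := by
    refine ⟨K.max' ⟨s, hsK⟩, ?_⟩
    simp only [C, Finset.mem_filter]
    refine ⟨Finset.max'_mem _ _, Finset.le_max' _ _ hsK, hQ0 _ ?_⟩
    rintro j hj ⟨_, h2⟩
    exact absurd (Finset.le_max' K _ (hK2 j hj)) (not_le.mpr h2)
  have hmem := Finset.min'_mem C hC
  have hmem' := hmem
  simp only [C, Finset.mem_filter] at hmem'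
  refine ⟨C.min' hC, hmem'.2.1, hmem'.2.2, ?_⟩
  intro t' hst ht' hq
  let D := K.filter (fun t => t ≤ t')
  have hsD : s ∈ D := by simp only [D, Finset.mem_filter]; exact ⟨hsK, hst⟩
  have hD : D.Nonempty := ⟨s, hsD⟩
  have hd := Finset.max'_mem D hD
  have hd' := hd
  simp only [D, Finset.mem_filter] at hd'
  have hle : ∀ b ∈ K, b ≤ t' ↔ b ≤ D.max' hD := by
    intro b hb
    constructor
    · intro h
      exact Finset.le_max' D b (by simp only [D, Finset.mem_filter]; exact ⟨hb, h⟩)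
    · intro h
      exact h.trans hd'.2
  have hq' : Q (D.max' hD) := by
    refine hQ t' _ (fun j hj => ?_) hq
    rw [hle _ (hK1 j hj), ← not_le, ← not_le, hle _ (hK2 j hj)]
  have : D.max' hD ∈ C := by
    simp only [C, Finset.mem_filter]
    exact ⟨hd'.1, Finset.le_max' D s hsD, hq'⟩
  have := Finset.min'_le C _ this
  linarith [hd'.2]

lemma load_congr {ι M : Type*} [AddCommMonoid M] (S : Finset ι) (σ p : ι → ℚ) (w : ι → M)
    (t t' : ℚ)
    (h : ∀ j ∈ S, (σ j ≤ t ∧ t < σ j + p j) ↔ (σ j ≤ t' ∧ t' < σ j + p j)) :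
    load S σ p w t = load S σ p w t' := by
  refine Finset.sum_congr rfl fun j hj => ?_
  simp only [h j hj]

lemma load_zero {ι M : Type*} [AddCommMonoid M] (S : Finset ι) (σ p : ι → ℚ) (w : ι → M)
    (t : ℚ) (h : ∀ j ∈ S, ¬ (σ j ≤ t ∧ t < σ j + p j)) :
    load S σ p w t = 0 :=
  Finset.sum_eq_zero fun j hj => if_neg (h j hj)

lemma load_insert {ι M : Type*} [DecidableEq ι] [AddCommMonoid M] (S : Finset ι) (σ p : ι → ℚ)
    (w : ι → M) (a : ι) (ha : a ∉ S) (x t : ℚ) :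
    load (insert a S) (Function.update σ a x) p w t =
      (if x ≤ t ∧ t < x + p a then w a else 0) + load S σ p w t := by
  unfold load
  rw [Finset.sum_insert ha]
  congr 1
  · simp
  · refine Finset.sum_congr rfl fun j hj => ?_
    have : j ≠ a := fun h => ha (h ▸ hj)
    simp [Function.update_of_ne this]

/-- Invariant of the list scheduling procedure. -/
structure Good {ι : Type*} (m R : ℕ) (p : ι → ℚ) (r : ι → ℕ) (L : ℚ) (S : Finset ι)
    (σ : ι → ℚ) (s : ℚ) : Prop where
  s0 : 0 ≤ s
  nonneg : ∀ j ∈ S, 0 ≤ σ j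
  fin : ∀ j ∈ S, σ j + p j ≤ L
  fc : ∀ t, load S σ p (fun _ => 1) t ≤ m
  fr : ∀ t, load S σ p r t ≤ R
  ac : ∀ t t', s ≤ t → t ≤ t' → load S σ p (fun _ => 1) t' ≤ load S σ p (fun _ => 1) t
  ar : ∀ t t', s ≤ t → t ≤ t' → load S σ p r t' ≤ load S σ p r t
  full : ∀ t, 0 ≤ t → t < s → m ≤ load S σ p (fun _ => 1) t ∨ R ≤ 2 * load S σ p r t

lemma cover2 {ι : Type*} (m R : ℕ) (hm : 1 ≤ m) (hR : 1 ≤ R) (S : Finset ι) (σ p : ι → ℚ)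
    (r : ι → ℕ) (s : ℚ) (hs : 0 ≤ s)
    (hσ : ∀ j ∈ S, 0 ≤ σ j) (hp : ∀ j ∈ S, 0 < p j)
    (full : ∀ t, 0 ≤ t → t < s → m ≤ load S σ p (fun _ => 1) t ∨ R ≤ 2 * load S σ p r t) :
    s ≤ (∑ j ∈ S, p j) / m + 2 * (∑ j ∈ S, (r j : ℚ) * p j) / R := by
  have hm' : (0 : ℚ) < m := by exact_mod_cast hm
  have hR' : (0 : ℚ) < R := by exact_mod_cast hR
  have := cover S σ p (fun j => 1 / m + 2 * r j / R) s hs hσ hp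
    (fun j _ => by positivity) ?_
  · refine this.trans (le_of_eq ?_)
    rw [Finset.mul_sum, Finset.sum_div, Finset.sum_div, ← Finset.sum_add_distrib]
    refine Finset.sum_congr rfl fun j _ => ?_
    ring
  · intro t ht hts
    have e : load S σ p (fun j => (1 : ℚ) / m + 2 * r j / R) t =
        ((load S σ p (fun _ => 1) t : ℕ) : ℚ) / m + 2 * ((load S σ p r t : ℕ) : ℚ) / R := by
      unfold load
      push_cast
      rw [Finset.mul_sum, Finset.sum_div, Finset.sum_div, ← Finset.sum_add_distrib]
      refine Finset.sum_congr rfl fun j _ => ?_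
      split_ifs <;> simp
    rw [e]
    rcases full t ht hts with h | h
    · have h1 : (m : ℚ) ≤ (load S σ p (fun _ => 1) t : ℕ) := by exact_mod_cast h
      have h2 : 1 ≤ ((load S σ p (fun _ => 1) t : ℕ) : ℚ) / m := by rwa [one_le_div hm']
      have h3 : 0 ≤ 2 * ((load S σ p r t : ℕ) : ℚ) / R := by positivity
      linarith
    · have h1 : (R : ℚ) ≤ 2 * (load S σ p r t : ℕ) := by exact_mod_cast h
      have h2 : 1 ≤ 2 * ((load S σ p r t : ℕ) : ℚ) / R := by rwa [one_le_div hR']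
      have h3 : 0 ≤ ((load S σ p (fun _ => 1) t : ℕ) : ℚ) / m := by positivity
      linarith

lemma step {ι : Type*} [DecidableEq ι] (m R : ℕ) (hm : 1 ≤ m) (hR : 1 ≤ R) (p : ι → ℚ)
    (r : ι → ℕ) (L q : ℚ) (S : Finset ι) (hp : ∀ j ∈ S, 0 < p j) (a : ι) (ha : a ∉ S)
    (hpa : 0 < p a) (hpq : p a ≤ q) (hra : 2 * r a ≤ R)
    (hb : (∑ j ∈ S, p j) / m + 2 * (∑ j ∈ S, (r j : ℚ) * p j) / R + q ≤ L)
    (h : ∃ σ s, Good m R p r L S σ s) : ∃ σ s, Good m R p r L (insert a S) σ s := by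
  obtain ⟨σ, s, g⟩ := h
  obtain ⟨x, hsx, ⟨hx1, hx2⟩, hx3⟩ := firstfit S σ p hp s
    (fun t => load S σ p (fun _ => 1) t + 1 ≤ m ∧ load S σ p r t + r a ≤ R)
    (by
      intro t t' h
      simp only [load_congr S σ p _ t t' h]
      exact id)
    (by
      intro t h
      simp only [load_zero S σ p _ t h]
      omega)
  have hx0 : 0 ≤ x := g.s0.trans hsx
  have full : ∀ t, 0 ≤ t → t < x → m ≤ load S σ p (fun _ => 1) t ∨ R ≤ 2 * load S σ p r t := by
    intro t h0 ht
    rcases lt_or_ge t s with h | h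
    · exact g.full t h0 h
    · have := hx3 t h ht
      omega
  have hxL := cover2 m R hm hR S σ p r x hx0 g.nonneg hp full
  have hne : ∀ j ∈ S, j ≠ a := fun j hj h => ha (h ▸ hj)
  refine ⟨Function.update σ a x, x, hx0, ?_, ?_, ?_, ?_, ?_, ?_, ?_⟩
  · intro j hj
    rcases Finset.mem_insert.mp hj with rfl | hj
    · simpa using hx0
    · rw [Function.update_of_ne (hne j hj)]; exact g.nonneg j hj
  · intro j hj
    rcases Finset.mem_insert.mp hj with rfl | hj
    · simp only [Function.update_self]; linarith
    · rw [Function.update_of_ne (hne j hj)]; exact g.fin j hj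
  · intro t
    rw [load_insert S σ p _ a ha]
    have h1 := g.fc t
    split_ifs with hc
    · have := g.ac x t hsx hc.1
      omega
    · omega
  · intro t
    rw [load_insert S σ p _ a ha]
    have h1 := g.fr t
    split_ifs with hc
    · have := g.ar x t hsx hc.1
      omega
    · omega
  · intro t t' h1 h2
    rw [load_insert S σ p _ a ha, load_insert S σ p _ a ha]
    have := g.ac t t' (hsx.trans h1) h2
    split_ifs with hc hd hd
    · omega
    · exact absurd ⟨h1, h2.trans_lt hc.2⟩ hd
    · omega
    · omega
  · intro t t' h1 h2
    rw [load_insert S σ p _ a ha, load_insert S σ p _ a ha]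
    have := g.ar t t' (hsx.trans h1) h2
    split_ifs with hc hd hd
    · omega
    · exact absurd ⟨h1, h2.trans_lt hc.2⟩ hd
    · omega
    · omega
  · intro t h0 h1
    rw [load_insert S σ p _ a ha, load_insert S σ p _ a ha]
    have := full t h0 h1
    omega

lemma big {ι : Type*} [DecidableEq ι] (p : ι → ℚ) (r : ι → ℕ) (B : Finset ι)
    (hp : ∀ j ∈ B, 0 < p j) :
    ∃ σ : ι → ℚ, (∀ j ∈ B, 0 ≤ σ j ∧ σ j + p j ≤ ∑ j ∈ B, p j) ∧
      (∀ t, 0 ≤ t → t < ∑ j ∈ B, p j → ∃ j ∈ B, ∀ w : ι → ℕ, load B σ p w t = w j) ∧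
      (∀ t t', 0 ≤ t → t ≤ t' → load B σ p r t' ≤ load B σ p r t) := by
  induction B using Finset.induction_on_min_value r with
  | empty =>
    refine ⟨0, by simp, ?_, ?_⟩
    · intro t h0 h1
      simp at h1
      linarith
    · intro t t' _ _
      simp [load]
  | insert a S ha hmin ih =>
    obtain ⟨σ, h1, h2, h3⟩ := ih (fun j hj => hp j (Finset.mem_insert_of_mem hj))
    have hpa := hp a (Finset.mem_insert_self _ _)
    have hne : ∀ j ∈ S, j ≠ a := fun j hj h => ha (h ▸ hj)
    have hS0 : 0 ≤ ∑ j ∈ S, p j :=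
      Finset.sum_nonneg fun j hj => (hp j (Finset.mem_insert_of_mem hj)).le
    have hz : ∀ t, ∑ j ∈ S, p j ≤ t → ∀ w : ι → ℕ, load S σ p w t = 0 := by
      intro t ht w
      refine load_zero S σ p w t fun j hj h => ?_
      have := (h1 j hj).2
      linarith [h.2]
    refine ⟨Function.update σ a (∑ j ∈ S, p j), ?_, ?_, ?_⟩
    · intro j hj
      rw [Finset.sum_insert ha]
      rcases Finset.mem_insert.mp hj with rfl | hj
      · simp only [Function.update_self]
        exact ⟨hS0, by linarith⟩
      · rw [Function.update_of_ne (hne j hj)]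
        exact ⟨(h1 j hj).1, by linarith [(h1 j hj).2]⟩
    · intro t h0 ht
      rw [Finset.sum_insert ha] at ht
      rcases lt_or_ge t (∑ j ∈ S, p j) with h | h
      · obtain ⟨j, hj, hw⟩ := h2 t h0 h
        refine ⟨j, Finset.mem_insert_of_mem hj, fun w => ?_⟩
        rw [load_insert S σ p _ a ha, if_neg (fun hc => absurd hc.1 (not_le.mpr h)), hw, zero_add]
      · refine ⟨a, Finset.mem_insert_self _ _, fun w => ?_⟩
        rw [load_insert S σ p _ a ha, if_pos ⟨h, by linarith⟩, hz t h, add_zero]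
    · intro t t' h0 htt
      rw [load_insert S σ p _ a ha, load_insert S σ p _ a ha]
      have h3' := h3 t t' h0 htt
      rcases lt_or_ge t (∑ j ∈ S, p j) with h | h
      · obtain ⟨j, hj, hw⟩ := h2 t h0 h
        have hj' := hmin j hj
        rcases lt_or_ge t' (∑ j ∈ S, p j) with h' | h'
        · rw [if_neg (fun hc => absurd hc.1 (not_le.mpr h'))]
          omega
        · rw [hz t' h', hw]
          split_ifs <;> omega
      · rw [hz t h, hz t' (h.trans htt)]
        split_ifs with hc hd hd
        · omega
        · exact absurd ⟨h, htt.trans_lt hc.2⟩ hd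
        · omega
        · omega

lemma bigGood {ι : Type*} [DecidableEq ι] (m R : ℕ) (hm : 1 ≤ m) (hR : 1 ≤ R) (p : ι → ℚ)
    (r : ι → ℕ) (L : ℚ) (B : Finset ι)
    (hp : ∀ j ∈ B, 0 < p j) (hr : ∀ j ∈ B, r j ≤ R) (hB : ∀ j ∈ B, R ≤ 2 * r j)
    (hb : (∑ j ∈ B, p j) / m + 2 * (∑ j ∈ B, (r j : ℚ) * p j) / R ≤ L) :
    ∃ σ s, Good m R p r L B σ s := by
  obtain ⟨σ, h1, h2, h3⟩ := big p r B hp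
  have hS0 : 0 ≤ ∑ j ∈ B, p j := Finset.sum_nonneg fun j hj => (hp j hj).le
  have hc := cover2 m R hm hR B σ p r _ hS0 (fun j hj => (h1 j hj).1) hp (by
    intro t h0 ht
    obtain ⟨j, hj, hw⟩ := h2 t h0 ht
    right
    rw [hw]
    exact hB j hj)
  have hz : ∀ t, ∑ j ∈ B, p j ≤ t → ∀ w : ι → ℕ, load B σ p w t = 0 := by
    intro t ht w
    refine load_zero B σ p w t fun j hj h => ?_
    have := (h1 j hj).2
    linarith [h.2]
  have hn : ∀ t, t < 0 → ∀ w : ι → ℕ, load B σ p w t = 0 := by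
    intro t ht w
    refine load_zero B σ p w t fun j hj h => ?_
    have := (h1 j hj).1
    linarith [h.1]
  refine ⟨σ, 0, le_rfl, fun j hj => (h1 j hj).1, ?_, ?_, ?_, ?_, h3, ?_⟩
  · intro j hj
    linarith [(h1 j hj).2]
  · intro t
    rcases lt_or_ge t 0 with h | h
    · rw [hn t h]; omega
    · rcases lt_or_ge t (∑ j ∈ B, p j) with h' | h'
      · obtain ⟨j, hj, hw⟩ := h2 t h h'
        rw [hw]; exact hm
      · rw [hz t h']; omega
  · intro t
    rcases lt_or_ge t 0 with h | h
    · rw [hn t h]; omega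
    · rcases lt_or_ge t (∑ j ∈ B, p j) with h' | h'
      · obtain ⟨j, hj, hw⟩ := h2 t h h'
        rw [hw]; exact hr j hj
      · rw [hz t h']; omega
  · intro t t' h0 htt
    rcases lt_or_ge t' (∑ j ∈ B, p j) with h' | h'
    · obtain ⟨j, hj, hw⟩ := h2 t h0 (htt.trans_lt h')
      obtain ⟨j', hj', hw'⟩ := h2 t' (h0.trans htt) h'
      rw [hw, hw']
    · rw [hz t' h']; omega
  · intro t h0 h1
    linarith

lemma bound_mono {ι : Type*} (m R : ℕ) (p : ι → ℚ) (r : ι → ℕ) (S J : Finset ι) (h : S ⊆ J)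
    (hp : ∀ j ∈ J, 0 < p j) :
    (∑ j ∈ S, p j) / m + 2 * (∑ j ∈ S, (r j : ℚ) * p j) / R ≤
      (∑ j ∈ J, p j) / m + 2 * (∑ j ∈ J, (r j : ℚ) * p j) / R := by
  have h1 : ∑ j ∈ S, p j ≤ ∑ j ∈ J, p j :=
    Finset.sum_le_sum_of_subset_of_nonneg h fun j hj _ => (hp j hj).le
  have h2 : ∑ j ∈ S, (r j : ℚ) * p j ≤ ∑ j ∈ J, (r j : ℚ) * p j :=
    Finset.sum_le_sum_of_subset_of_nonneg h fun j hj _ =>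
      mul_nonneg (Nat.cast_nonneg _) (hp j hj).le
  gcongr

end MedJobs

/-- medium jobs can be scheduled with makespan at most `4εT`:
if every job has processing time at most `εT` and `p(J)/m + 2·area(J)/R ≤ 3εT`, then
there is a feasible schedule in which every job finishes by time `4εT`. -/
theorem medium_jobs_schedule {ι : Type*} (m R : ℕ) (J : Finset ι)
    (p : ι → ℚ) (r : ι → ℕ)
    (hm : 1 ≤ m) (hR : 1 ≤ R)
    (hp : ∀ j ∈ J, 0 < p j) (hr : ∀ j ∈ J, r j ≤ R)
    (ε : ℚ) (hε0 : 0 < ε) (hε1 : ε ≤ 1)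
    (T : ℚ) (hT : 0 < T)
    (hsmall : ∀ j ∈ J, p j ≤ ε * T)
    (hbound : (∑ j ∈ J, p j) / m + 2 * (∑ j ∈ J, (r j : ℚ) * p j) / R ≤ 3 * ε * T) :
    ∃ σ : ι → ℚ, (∀ j ∈ J, 0 ≤ σ j) ∧ Feasible m R J σ p r ∧
      ∀ j ∈ J, σ j + p j ≤ 4 * ε * T := by
  classical
  have hq : 0 < ε * T := mul_pos hε0 hT
  let B := J.filter (fun j => R < 2 * r j)
  have hBJ : B ⊆ J := Finset.filter_subset _ _
  have hB := MedJobs.bigGood m R hm hR p r (4 * ε * T) B (fun j hj => hp j (hBJ hj))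
    (fun j hj => hr j (hBJ hj)) (fun j hj => (Finset.mem_filter.mp hj).2.le)
    (by
      have := MedJobs.bound_mono m R p r B J hBJ hp
      linarith)
  have main : ∀ A : Finset ι, A ⊆ J.filter (fun j => ¬ R < 2 * r j) →
      ∃ σ s, MedJobs.Good m R p r (4 * ε * T) (A ∪ B) σ s := by
    intro A
    induction A using Finset.induction_on with
    | empty => intro _; simpa using hB
    | insert a A ha ih =>
      intro hA
      have haA := Finset.mem_filter.mp (hA (Finset.mem_insert_self _ _))
      have hA' : A ⊆ J.filter (fun j => ¬ R < 2 * r j) :=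
        fun j hj => hA (Finset.mem_insert_of_mem hj)
      have hS : A ∪ B ⊆ J := Finset.union_subset (hA'.trans (Finset.filter_subset _ _)) hBJ
      rw [Finset.insert_union]
      refine MedJobs.step m R hm hR p r (4 * ε * T) (ε * T) (A ∪ B) (fun j hj => hp j (hS hj)) a
        ?_ (hp a haA.1) (hsmall a haA.1) (not_lt.mp haA.2) ?_ (ih hA')
      · intro h
        rcases Finset.mem_union.mp h with h | h
        · exact ha h
        · exact haA.2 (Finset.mem_filter.mp h).2
      · have := MedJobs.bound_mono m R p r (A ∪ B) J hS hp
        linarith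
  obtain ⟨σ, s, g⟩ := main _ (Finset.Subset.refl _)
  have e : J.filter (fun j => ¬ R < 2 * r j) ∪ B = J := by
    rw [Finset.union_comm]
    exact Finset.filter_union_filter_not_eq _ _
  rw [e] at g
  refine ⟨σ, g.nonneg, fun t => ⟨?_, ?_⟩, g.fin⟩
  · have := g.fc t
    rw [activeSet, Finset.card_filter]
    exact this
  · have := g.fr t
    rw [activeSet, Finset.sum_filter]
    exact this
end

section
/- Let ε ∈ (0,1] with 1/ε ∈ ℕ, let T ∈ ℚ with T > 0, let k ∈ ℕ, and let (m, R, J, p, r) be an instance such that for every job j ∈ J there is an integer l_j with 1 ≤ l_j ≤ k and ε^{l_j}·T ≤ p(j) < ε^{l_j−1}·T. Define the rounded processing time p'(j) = ⌈p(j)/(ε^{l_j+1}·T)⌉ · ε^{l_j+1}·T. Then: (i) for each j there is an integer k_j with 1/ε ≤ k_j ≤ 1/ε² such that p'(j) = k_j·ε^{l_j+1}·T, and p(j) ≤ p'(j); and (ii) for every feasible schedule σ of (m, R, J, p, r) with makespan M there exists a feasible schedule σ' of the rounded instance (m, R, J, p', r) with makespan at most (1+2ε)·M in which each σ'(j) is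 a nonnegative integer multiple of ε^{l_j+1}·T. -/
/-- rounding of processing times.  Jobs with `ε^{l_j}·T ≤ p(j) < ε^{l_j−1}·T`
are rounded to `p'(j) = ⌈p(j)/(ε^{l_j+1}·T)⌉·ε^{l_j+1}·T`; then each `p'(j)` is
`k_j·ε^{l_j+1}·T` with `1/ε ≤ k_j ≤ 1/ε²` and `p(j) ≤ p'(j)`, and any feasible schedule
of makespan at most `M` can be transformed into a feasible schedule of the rounded
instance of makespan at most `(1+2ε)·M` in which every job starts at a nonnegative
integer multiple of `ε^{l_j+1}·T`. -/
theorem rounding_processing_times {ι : Type*} (m R : ℕ) (J : Finset ι)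
    (p : ι → ℚ) (r : ι → ℕ)
    (hm : 1 ≤ m) (hR : 1 ≤ R)
    (hp : ∀ j ∈ J, 0 < p j) (hr : ∀ j ∈ J, r j ≤ R)
    (ε : ℚ) (hε0 : 0 < ε) (hε1 : ε ≤ 1)
    (N : ℕ) (hN : 1 ≤ N) (hεN : ε = 1 / (N : ℚ))
    (T : ℚ) (hT : 0 < T) (k : ℕ)
    (l : ι → ℕ) (hl : ∀ j ∈ J, 1 ≤ l j ∧ l j ≤ k)
    (hpl : ∀ j ∈ J, ε ^ (l j) * T ≤ p j ∧ p j < ε ^ (l j - 1) * T)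
    (p' : ι → ℚ)
    (hp' : ∀ j ∈ J, p' j = ⌈p j / (ε ^ (l j + 1) * T)⌉ * (ε ^ (l j + 1) * T)) :
    (∀ j ∈ J, ∃ kj : ℕ, (1 / ε : ℚ) ≤ kj ∧ (kj : ℚ) ≤ 1 / ε ^ 2 ∧
        p' j = kj * (ε ^ (l j + 1) * T) ∧ p j ≤ p' j) ∧
    (∀ (σ : ι → ℚ) (M : ℚ), (∀ j ∈ J, 0 ≤ σ j) → Feasible m R J σ p r →
      (∀ j ∈ J, σ j + p j ≤ M) →
      ∃ σ' : ι → ℚ, (∀ j ∈ J, 0 ≤ σ' j) ∧ Feasible m R J σ' p' r ∧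
        (∀ j ∈ J, σ' j + p' j ≤ (1 + 2 * ε) * M) ∧
        (∀ j ∈ J, ∃ a : ℕ, σ' j = a * (ε ^ (l j + 1) * T))) := by
  have hu : ∀ j, 0 < ε ^ (l j + 1) * T := fun j => by positivity
  have hle : ∀ j ∈ J, p j ≤ p' j := by
    intro j hj
    rw [hp' j hj]
    exact (div_le_iff₀ (hu j)).1 (Int.le_ceil _)
  have hlt : ∀ j ∈ J, p' j < p j + ε ^ (l j + 1) * T := by
    intro j hj
    rw [hp' j hj]
    have h := Int.ceil_lt_add_one (p j / (ε ^ (l j + 1) * T))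
    have h2 := mul_lt_mul_of_pos_right h (hu j)
    rwa [add_mul, div_mul_cancel₀ _ (hu j).ne', one_mul] at h2
  refine ⟨?_, ?_⟩
  · intro j hj
    have hpos : 0 ≤ p j / (ε ^ (l j + 1) * T) := div_nonneg (hp j hj).le (hu j).le
    have hc : 0 ≤ ⌈p j / (ε ^ (l j + 1) * T)⌉ := Int.ceil_nonneg hpos
    obtain ⟨n, hn⟩ := Int.eq_ofNat_of_zero_le hc
    have hnq : ((n : ℕ) : ℚ) = (⌈p j / (ε ^ (l j + 1) * T)⌉ : ℚ) := by rw [hn]; simp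
    refine ⟨n, ?_, ?_, ?_, hle j hj⟩
    · rw [hnq]
      refine le_trans ?_ (Int.le_ceil _)
      rw [div_le_div_iff₀ hε0 (hu j)]
      have := mul_le_mul_of_nonneg_right (hpl j hj).1 hε0.le
      calc 1 * (ε ^ (l j + 1) * T) = ε ^ l j * T * ε := by ring
        _ ≤ _ := this
    · have hN2 : 1 / ε ^ 2 = (((N : ℤ) ^ 2 : ℤ) : ℚ) := by
        rw [hεN]; push_cast; simp
      rw [hnq, hN2]
      have : ⌈p j / (ε ^ (l j + 1) * T)⌉ ≤ (N : ℤ) ^ 2 := by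
        rw [Int.ceil_le, ← hN2, div_le_div_iff₀ (hu j) (by positivity)]
        have h1 := mul_le_mul_of_nonneg_right (hpl j hj).2.le (by positivity : 0 ≤ ε ^ 2)
        refine h1.trans (le_of_eq ?_)
        obtain ⟨q, hq⟩ := Nat.exists_eq_add_of_le (hl j hj).1
        rw [hq]
        have : 1 + q - 1 = q := by omega
        rw [this]
        ring
      exact_mod_cast this
    · rw [hnq]; exact hp' j hj
  · intro σ M hσ hf hM
    have hpos : (0 : ℚ) < 1 + 2 * ε := by positivity
    let σ' : ι → ℚ := fun j =>
      (⌈(1 + 2 * ε) * σ j / (ε ^ (l j + 1) * T)⌉₊ : ℚ) * (ε ^ (l j + 1) * T)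
    have h1 : ∀ j, (1 + 2 * ε) * σ j ≤ σ' j := fun j =>
      (div_le_iff₀ (hu j)).1 (Nat.le_ceil _)
    have h2 : ∀ j ∈ J, σ' j + p' j ≤ (1 + 2 * ε) * (σ j + p j) := by
      intro j hj
      have hnn : 0 ≤ (1 + 2 * ε) * σ j / (ε ^ (l j + 1) * T) :=
        div_nonneg (mul_nonneg hpos.le (hσ j hj)) (hu j).le
      have h := mul_lt_mul_of_pos_right (Nat.ceil_lt_add_one hnn) (hu j)
      rw [add_mul (_ / _) 1, div_mul_cancel₀ _ (hu j).ne', one_mul] at h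
      have h3 : ε ^ (l j + 1) * T ≤ ε * p j := by
        calc ε ^ (l j + 1) * T = ε * (ε ^ l j * T) := by ring
          _ ≤ _ := mul_le_mul_of_nonneg_left (hpl j hj).1 hε0.le
      have h4 := hlt j hj
      have h5 : σ' j < (1 + 2 * ε) * σ j + ε ^ (l j + 1) * T := h
      linarith
    refine ⟨σ', fun j _ => mul_nonneg (Nat.cast_nonneg _) (hu j).le, ?_, ?_,
      fun j _ => ⟨_, rfl⟩⟩
    · intro t
      have hsub : activeSet J σ' p' t ⊆ activeSet J σ p (t / (1 + 2 * ε)) := by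
        intro j hj
        simp only [activeSet, Finset.mem_filter] at hj ⊢
        obtain ⟨hj, ha, hb⟩ := hj
        refine ⟨hj, ?_, ?_⟩
        · rw [le_div_iff₀ hpos]
          linarith [h1 j]
        · rw [div_lt_iff₀ hpos]
          linarith [h2 j hj]
      exact ⟨(Finset.card_le_card hsub).trans (hf _).1,
        (Finset.sum_le_sum_of_subset hsub).trans (hf _).2⟩
    · intro j hj
      exact (h2 j hj).trans (mul_le_mul_of_nonneg_left (hM j hj) hpos.le)
end

section
/- Let J and S be finite sets, let K ∈ ℕ, and let x : J × S → ℝ be such that x(j,s) ≥ 0 for all (j,s), ∑_{s∈S} x(j,s) = 1 for every j ∈ J, and the number of pairs (j,s) with x(j,s) > 0 is at most |J| + K. Call a job j fractionally scheduled if there exist two distinct s, s' ∈ S with x(j,s) > 0 and x(j,s') > 0. Then the number of fractionally scheduled jobs is at most K. Moreover, if r : J → ℝ satisfies 0 ≤ r(j) ≤ α·R for all j (with α, R ≥ 0), then the sum of r(j) over all fractionally scheduled jobs is at most K·α·R. -/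
open scoped Classical

/-- the counting argument for basic solutions of `LP_large`.
If an assignment `x` schedules every job fully (`∑_s x(j,s) = 1`) using at most
`|J| + K` non-zero components, then at most `K` jobs are scheduled fractionally,
and if each resource requirement is at most `α·R` the fractionally scheduled jobs
use at most `K·α·R` resources in total. -/
theorem fractional_jobs_count {ι κ : Type*} (J : Finset ι) (S : Finset κ)
    (K : ℕ) (x : ι → κ → ℝ)
    (hx0 : ∀ j ∈ J, ∀ s ∈ S, 0 ≤ x j s)
    (hx1 : ∀ j ∈ J, ∑ s ∈ S, x j s = 1)
    (hnz : ((J ×ˢ S).filter (fun q => 0 < x q.1 q.2)).card ≤ J.card + K) :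
    (J.filter (fun j => ∃ s ∈ S, ∃ s' ∈ S, s ≠ s' ∧ 0 < x j s ∧ 0 < x j s')).card ≤ K ∧
    ∀ (r : ι → ℝ) (α R : ℝ), 0 ≤ α → 0 ≤ R → (∀ j ∈ J, 0 ≤ r j ∧ r j ≤ α * R) →
      ∑ j ∈ J.filter (fun j => ∃ s ∈ S, ∃ s' ∈ S, s ≠ s' ∧ 0 < x j s ∧ 0 < x j s'), r j
        ≤ K * α * R := by
  have hK : (J.filter (fun j => ∃ s ∈ S, ∃ s' ∈ S, s ≠ s' ∧ 0 < x j s ∧ 0 < x j s')).card ≤ K := by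
    have h1 : J.card +
        (J.filter (fun j => ∃ s ∈ S, ∃ s' ∈ S, s ≠ s' ∧ 0 < x j s ∧ 0 < x j s')).card ≤
        ((J ×ˢ S).filter (fun q => 0 < x q.1 q.2)).card := by
      rw [Finset.card_filter, Finset.card_filter, Finset.sum_product, Finset.card_eq_sum_ones,
        ← Finset.sum_add_distrib]
      apply Finset.sum_le_sum
      intro j hj
      rw [← Finset.card_filter]
      split_ifs with h
      · obtain ⟨s, hs, s', hs', hne, h1, h2⟩ := h
        have : 1 < (S.filter (fun s => 0 < x j s)).card :=
          Finset.one_lt_card.2 ⟨s, by simp [hs, h1], s', by simp [hs', h2], hne⟩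
        exact this
      · have : 0 < (S.filter (fun s => 0 < x j s)).card := by
          obtain ⟨s, hs, h⟩ : ∃ s ∈ S, 0 < x j s := by
            by_contra! hc
            have := Finset.sum_nonpos hc
            linarith [hx1 j hj]
          exact Finset.card_pos.2 ⟨s, by simp [hs, h]⟩
        exact this
    omega
  refine ⟨hK, fun r α R hα hR hr => ?_⟩
  refine (Finset.sum_le_card_nsmul _ _ (α * R)
    (fun j hj => (hr j (Finset.mem_filter.1 hj).1).2)).trans ?_
  rw [nsmul_eq_mul, mul_assoc]
  exact mul_le_mul_of_nonneg_right (by exact_mod_cast hK) (mul_nonneg hα hR)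
end
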